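/- arXiv:2202.07628 — 2 statements merged into one kernel-verified Lean document; each statement's English description precedes it below -/
import Mathlib

section
/- Let G be a finite simple graph and T a set of vertices of G. Suppose J is an edge set of G of minimum cardinality among all edge sets whose set of odd-degree vertices equals T. Then the spanning subgraph (V, J) is acyclic, i.e., contains no cycle. -/
/-- The set of vertices having odd degree in the spanning subgraph with edge set
`J` (a vertex has odd degree iff it is incident to an odd number of edges of `J`). -/
def oddVertexSet {V : Type*} (J : Set (Sym2 V)) : Set V :=
  {v | Odd ({e ∈ J | v ∈ e}).ncard}

/-- If `J` is an edge set of minimum cardinality among all edge sets whose set of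
odd-degree vertices equals `T`, then the spanning subgraph `(V, J)` is acyclic. -/
theorem minimum_oddVertexSet_acyclic {V : Type*} [Fintype V] (G : SimpleGraph V)
    (T : Set V) (J : Set (Sym2 V)) (hJ : J ⊆ G.edgeSet)
    (hT : oddVertexSet J = T)
    (hmin : ∀ J' : Set (Sym2 V), J' ⊆ G.edgeSet → oddVertexSet J' = T →
      J.ncard ≤ J'.ncard) :
    ¬ ∃ (x : V) (c : G.Walk x x), c.IsCycle ∧ ∀ e ∈ c.edges, e ∈ J := by
  classical
  rintro ⟨x, c, hc, hcJ⟩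
  set C : Set (Sym2 V) := {e | e ∈ c.edges} with hC
  have hCJ : C ⊆ J := hcJ
  have hnd : c.edges.Nodup := hc.isTrail.edges_nodup
  have heven : ∀ v, Even ({e ∈ C | v ∈ e}).ncard := by
    intro v
    have h1 := (hc.isTrail.even_countP_edges_iff v).2 (fun h => absurd rfl h)
    have h2 : {e ∈ C | v ∈ e} = ((c.edges.filter (fun e => v ∈ e)).toFinset : Set (Sym2 V)) := by
      ext e
      simp [hC]
    rw [h2, Set.ncard_coe_finset, List.toFinset_card_of_nodup (hnd.filter _),
      ← List.countP_eq_length_filter]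
    exact h1
  have hodd : oddVertexSet (J \ C) = T := by
    rw [← hT]
    ext v
    have h3 : {e ∈ J \ C | v ∈ e} = {e ∈ J | v ∈ e} \ {e ∈ C | v ∈ e} := by
      ext e
      simp only [Set.mem_setOf_eq, Set.mem_diff]
      tauto
    have h4 : {e ∈ C | v ∈ e} ⊆ {e ∈ J | v ∈ e} := fun e he => ⟨hCJ he.1, he.2⟩
    have h5 := Set.ncard_sdiff_add_ncard_of_subset h4 (Set.toFinite _)
    simp only [oddVertexSet, Set.mem_setOf_eq]
    rw [h3, ← h5, Nat.odd_add]
    simp [heven v]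
  have h6 := hmin (J \ C) (Set.diff_subset.trans hJ) hodd
  have h7 := Set.ncard_sdiff_add_ncard_of_subset hCJ (Set.toFinite _)
  have h8 : 0 < C.ncard := by
    rw [Set.ncard_pos (Set.toFinite _)]
    have h9 : 0 < c.edges.length := by
      have := hc.three_le_length
      rw [SimpleGraph.Walk.length_edges]
      omega
    exact ⟨_, List.getElem_mem h9⟩
  omega
end

section
/- Let G be a finite connected simple graph and T a set of vertices of G of even cardinality. Then the minimum cardinality of an edge set J whose set of odd-degree vertices equals T is equal to the minimum, over all perfect pairings M of the vertices of T (partitions of T into unordered pairs), of the sum over pairs (u, v) ∈ M of the shortest-path distance d(u, v) in G. In particular, connecting each pair of matched vertices of a distance-minimizing pairing by shortest paths yields a smallest odd-vertex pairing. -/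
inductive PairCost {V : Type*} (G : SimpleGraph V) : Finset V → ℕ → Prop
  | nil : PairCost G ∅ 0
  | cons (T T' : Finset V) (n : ℕ) (u v : V) : PairCost G T n → u ∉ T → v ∉ T → u ≠ v →
      (∀ w, w ∈ T' ↔ w ∈ T ∨ w = u ∨ w = v) → PairCost G T' (n + G.dist u v)

theorem PairCost.of_eq {V : Type*} {G : SimpleGraph V} {T T' : Finset V} {n m : ℕ}
    (h : PairCost G T n) (hT : ∀ w, w ∈ T' ↔ w ∈ T) (hn : m = n) : PairCost G T' m := by
  have : T' = T := Finset.ext hT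
  subst this; subst hn; exact h

open Classical in
theorem PairCost.split {V : Type*} {G : SimpleGraph V} {T : Finset V} {n : ℕ}
    (h : PairCost G T n) : ∀ u ∈ T, ∃ (a : V) (S : Finset V) (m : ℕ), PairCost G S m ∧
      u ∉ S ∧ a ∉ S ∧ u ≠ a ∧ (∀ w, w ∈ T ↔ w ∈ S ∨ w = u ∨ w = a) ∧ n = m + G.dist u a := by
  induction h with
  | nil => simp
  | cons T T' n p q hP hp hq hpq hT ih =>
    intro u hu
    by_cases h1 : u = p
    · subst h1
      exact ⟨q, T, n, hP, hp, hq, hpq, hT, rfl⟩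
    by_cases h2 : u = q
    · subst h2
      exact ⟨p, T, n, hP, hq, hp, hpq.symm, by grind, by rw [G.dist_comm]⟩
    have hu' : u ∈ T := by grind
    obtain ⟨a, S, m, hS, h3, h4, h5, h6, h7⟩ := ih u hu'
    refine ⟨a, S ∪ {p, q}, m + G.dist p q,
      PairCost.cons S _ m p q hS (by grind) (by grind) hpq (by grind), by grind, by grind, h5,
      by grind, by omega⟩

open Classical in
theorem PairCost.toggle {V : Type*} {G : SimpleGraph V} (hG : G.Connected) {T T' : Finset V} {n : ℕ}
    (h : PairCost G T n) {u v : V} (huv : G.Adj u v)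
    (hT' : ∀ w, w ∈ T' ↔ ¬ (w ∈ T ↔ (w = u ∨ w = v))) : ∃ m ≤ n + 1, PairCost G T' m := by
  have hne : u ≠ v := huv.ne
  have hd : G.dist u v = 1 := SimpleGraph.dist_eq_one_iff_adj.2 huv
  -- one endpoint in `T`
  have key : ∀ x y : V, G.dist x y = 1 → x ≠ y → x ∈ T → y ∉ T →
      (∀ w, w ∈ T' ↔ ¬ (w ∈ T ↔ (w = x ∨ w = y))) → ∃ m ≤ n + 1, PairCost G T' m := by
    intro x y hxy hn hx hy hT'
    obtain ⟨a, S, m, hS, h3, h4, h5, h6, h7⟩ := h.split x hx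
    have t := hG.dist_triangle (u := y) (v := x) (w := a)
    rw [G.dist_comm (u := y) (v := x)] at t
    exact ⟨m + G.dist y a, by omega,
      PairCost.cons S _ m y a hS (by grind) h4 (by grind) (by grind)⟩
  by_cases hu : u ∈ T
  · by_cases hv : v ∈ T
    · obtain ⟨a, S, m, hS, h3, h4, h5, h6, h7⟩ := h.split u hu
      by_cases hav : a = v
      · subst hav
        exact ⟨m, by omega, hS.of_eq (by grind) rfl⟩
      · obtain ⟨b, R, k, hR, g3, g4, g5, g6, g7⟩ := hS.split v (by grind)
        have t := hG.dist_triangle (u := a) (v := u) (w := b)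
        have t2 := hG.dist_triangle (u := u) (v := v) (w := b)
        rw [G.dist_comm (u := a) (v := u)] at t
        exact ⟨k + G.dist a b, by omega,
          PairCost.cons R _ k a b hR (by grind) (by grind) (by grind) (by grind)⟩
    · exact key u v hd hne hu hv hT'
  · by_cases hv : v ∈ T
    · exact key v u (by rw [G.dist_comm, hd]) hne.symm hv hu (by grind)
    · exact ⟨n + G.dist u v, by omega, PairCost.cons T _ n u v h hu hv hne (by grind)⟩

theorem mem_odd_insert {V : Type*} [Fintype V] (J : Set (Sym2 V)) (e : Sym2 V) (he : e ∉ J) (w : V) :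
    w ∈ oddVertexSet (insert e J) ↔ ¬ (w ∈ oddVertexSet J ↔ w ∈ e) := by
  unfold oddVertexSet
  simp only [Set.mem_setOf_eq]
  by_cases hw : w ∈ e
  · have : {x ∈ insert e J | w ∈ x} = insert e {x ∈ J | w ∈ x} := by
      ext x; simp only [Set.mem_setOf_eq, Set.mem_insert_iff]; grind
    rw [this, Set.ncard_insert_of_notMem (by simp [he])]
    simp [hw, Nat.odd_add_one]
  · have : {x ∈ insert e J | w ∈ x} = {x ∈ J | w ∈ x} := by
      ext x; simp only [Set.mem_setOf_eq, Set.mem_insert_iff]; grind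
    rw [this]
    simp [hw]

theorem exists_toggle {V : Type*} [Fintype V] (G : SimpleGraph V) (J : Set (Sym2 V))
    (hJ : J ⊆ G.edgeSet) {u v : V} (huv : G.Adj u v) : ∃ J' : Set (Sym2 V), J' ⊆ G.edgeSet ∧
      J'.ncard ≤ J.ncard + 1 ∧
      ∀ w, w ∈ oddVertexSet J' ↔ ¬ (w ∈ oddVertexSet J ↔ (w = u ∨ w = v)) := by
  by_cases he : s(u, v) ∈ J
  · refine ⟨J \ {s(u, v)}, Set.diff_subset.trans hJ,
      (Set.ncard_le_ncard Set.diff_subset J.toFinite).trans (Nat.le_succ _), fun w => ?_⟩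
    have := mem_odd_insert (J \ {s(u, v)}) s(u, v) (by simp) w
    rw [Set.insert_diff_singleton, Set.insert_eq_of_mem he, Sym2.mem_iff] at this
    tauto
  · refine ⟨insert s(u, v) J, Set.insert_subset huv hJ, Set.ncard_insert_le _ _, fun w => ?_⟩
    rw [mem_odd_insert _ _ he, Sym2.mem_iff]

theorem exists_walk_toggle {V : Type*} [Fintype V] (G : SimpleGraph V) {u v : V} (p : G.Walk u v)
    (J : Set (Sym2 V)) (hJ : J ⊆ G.edgeSet) : ∃ J' : Set (Sym2 V), J' ⊆ G.edgeSet ∧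
      J'.ncard ≤ J.ncard + p.length ∧
      ∀ w, w ∈ oddVertexSet J' ↔ ¬ (w ∈ oddVertexSet J ↔ ¬ (w = u ↔ w = v)) := by
  induction p generalizing J with
  | nil => exact ⟨J, hJ, by simp, by simp⟩
  | @cons a b c hab q ih =>
    obtain ⟨J1, h1, h2, h3⟩ := exists_toggle G J hJ hab
    obtain ⟨J2, g1, g2, g3⟩ := ih J1 h1
    refine ⟨J2, g1, by simp; omega, fun w => ?_⟩
    rw [g3, h3]
    have := hab.ne
    grind

theorem PairCost.exists_edges {V : Type*} [Fintype V] {G : SimpleGraph V} (hG : G.Connected)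
    {T : Finset V} {n : ℕ} (h : PairCost G T n) : ∃ J : Set (Sym2 V), J ⊆ G.edgeSet ∧
      oddVertexSet J = ↑T ∧ J.ncard ≤ n := by
  induction h with
  | nil => exact ⟨∅, by simp, by simp [oddVertexSet], by simp⟩
  | cons T T' n u v hP hu hv huv hT ih =>
    obtain ⟨J, h1, h2, h3⟩ := ih
    obtain ⟨p, hp⟩ := hG.exists_walk_length_eq_dist u v
    obtain ⟨J', g1, g2, g3⟩ := exists_walk_toggle G p J h1
    refine ⟨J', g1, ?_, by omega⟩
    ext w
    rw [g3, h2, Finset.mem_coe, Finset.mem_coe, hT]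
    grind

open Classical in
theorem exists_pairCost {V : Type*} [Fintype V] {G : SimpleGraph V} (hG : G.Connected) (k : ℕ) :
    ∀ (J : Set (Sym2 V)) (T : Finset V), J ⊆ G.edgeSet → oddVertexSet J = ↑T → J.ncard = k →
      ∃ n ≤ k, PairCost G T n := by
  induction k with
  | zero =>
    intro J T hJ hT hk
    have : J = ∅ := (Set.ncard_eq_zero J.toFinite).1 hk
    subst this
    have hT0 : T = ∅ := by
      rw [← Finset.coe_eq_empty, ← hT]; simp [oddVertexSet]
    subst hT0
    exact ⟨0, le_rfl, PairCost.nil⟩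
  | succ k ih =>
    intro J T hJ hT hk
    have hne : J.Nonempty := by
      rw [← Set.ncard_pos J.toFinite]; omega
    obtain ⟨e, he⟩ := hne
    induction e using Sym2.ind with
    | _ u v =>
    have huv : G.Adj u v := hJ he
    obtain ⟨n, hn, hP⟩ := ih (J \ {s(u, v)}) (oddVertexSet (J \ {s(u, v)})).toFinset
      (Set.diff_subset.trans hJ) (by simp)
      (by rw [Set.ncard_diff_singleton_of_mem he]; omega)
    obtain ⟨m, hm, hP'⟩ := hP.toggle (T' := T) hG huv (fun w => by
      have := mem_odd_insert (J \ {s(u, v)}) s(u, v) (by simp) w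
      rw [Set.insert_diff_singleton, Set.insert_eq_of_mem he, Sym2.mem_iff, hT] at this
      simpa using this)
    exact ⟨m, by omega, hP'⟩

open Classical in
theorem PairCost.exists_fun {V : Type*} {G : SimpleGraph V} {T : Finset V} {n : ℕ}
    (h : PairCost G T n) : ∃ f : V → V,
        (∀ v ∈ T, f v ∈ T ∧ f v ≠ v ∧ f (f v) = v) ∧
        2 * n = ∑ v ∈ T, G.dist v (f v) := by
  induction h with
  | nil => exact ⟨id, by simp, by simp⟩
  | cons T T' n u v hP hu hv huv hT ih =>
    obtain ⟨f, hf, hs⟩ := ih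
    have hT' : T' = insert u (insert v T) := by ext w; rw [hT]; grind
    refine ⟨fun w => if w = u then v else if w = v then u else f w, ?_, ?_⟩
    · grind
    · have e : ∑ w ∈ T, G.dist w (if w = u then v else if w = v then u else f w)
          = ∑ w ∈ T, G.dist w (f w) := by
        refine Finset.sum_congr rfl fun w hw => ?_
        rw [if_neg (by grind), if_neg (by grind)]
      rw [hT', Finset.sum_insert (by grind), Finset.sum_insert hv, e, ← hs]
      simp only [if_true, if_neg huv.symm]
      rw [G.dist_comm (u := v) (v := u)]
      ring

open Classical in
theorem pairCost_of_fun {V : Type*} {G : SimpleGraph V} (f : V → V) (k : ℕ) :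
    ∀ (T : Finset V) (n : ℕ), T.card = k → (∀ v ∈ T, f v ∈ T ∧ f v ≠ v ∧ f (f v) = v) →
        2 * n = ∑ v ∈ T, G.dist v (f v) → PairCost G T n := by
  induction k using Nat.strong_induction_on with
  | _ k ih =>
    intro T n hk hf hs
    rcases T.eq_empty_or_nonempty with rfl | ⟨u, hu⟩
    · have : n = 0 := by simpa using hs
      subst this; exact PairCost.nil
    obtain ⟨h1, h2, h3⟩ := hf u hu
    have hfu : f u ∈ T.erase u := Finset.mem_erase.2 ⟨h2, h1⟩
    have e1 := Finset.add_sum_erase T (fun v => G.dist v (f v)) hu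
    have e2 := Finset.add_sum_erase (T.erase u) (fun v => G.dist v (f v)) hfu
    have c1 := Finset.card_erase_lt_of_mem hu
    have c2 := Finset.card_erase_lt_of_mem hfu
    simp only [h3] at e1 e2
    rw [G.dist_comm (u := f u) (v := u)] at e2
    have hP := ih _ (by omega) ((T.erase u).erase (f u)) (n - G.dist u (f u)) rfl
      (by grind) (by omega)
    exact (PairCost.cons _ T _ u (f u) hP (by simp) (by simp) h2.symm (by grind)).of_eq
      (fun _ => Iff.rfl) (by omega)

open Classical in
theorem exists_pairCost_of_even {V : Type*} (G : SimpleGraph V) (k : ℕ) :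
    ∀ T : Finset V, T.card = 2 * k → ∃ n, PairCost G T n := by
  induction k with
  | zero =>
    intro T hT
    have : T = ∅ := by simpa using hT
    subst this; exact ⟨0, PairCost.nil⟩
  | succ k ih =>
    intro T hT
    obtain ⟨u, hu⟩ : T.Nonempty := by rw [← Finset.card_pos]; omega
    have c1 := Finset.card_erase_of_mem hu
    obtain ⟨v, hv⟩ : (T.erase u).Nonempty := by rw [← Finset.card_pos]; omega
    have c2 := Finset.card_erase_of_mem hv
    obtain ⟨n, hn⟩ := ih ((T.erase u).erase v) (by omega)
    exact ⟨_, PairCost.cons _ T _ u v hn (by simp) (by simp) (by grind) (by grind)⟩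

/-- In a finite connected simple graph, the minimum cardinality of an edge set
whose odd-degree vertex set equals `T` (with `|T|` even) equals the minimum, over
all perfect pairings of `T` (encoded as fixed-point-free involutions of `T`), of
the sum of shortest-path distances of the matched pairs. -/
theorem minimum_oddVertexPairing_eq_min_pairing_dist {V : Type*} [Fintype V]
    (G : SimpleGraph V) (hG : G.Connected) (T : Finset V) (hT : Even T.card) :
    sInf {n : ℕ | ∃ J : Set (Sym2 V),
        J ⊆ G.edgeSet ∧ oddVertexSet J = ↑T ∧ J.ncard = n} =
    sInf {n : ℕ | ∃ f : V → V,
        (∀ v ∈ T, f v ∈ T ∧ f v ≠ v ∧ f (f v) = v) ∧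
        2 * n = ∑ v ∈ T, G.dist v (f v)} := by
  have hne2 : {n : ℕ | ∃ f : V → V,
        (∀ v ∈ T, f v ∈ T ∧ f v ≠ v ∧ f (f v) = v) ∧
        2 * n = ∑ v ∈ T, G.dist v (f v)}.Nonempty := by
    obtain ⟨k, hk⟩ := hT
    obtain ⟨n, hn⟩ := exists_pairCost_of_even G k T (by omega)
    exact ⟨n, hn.exists_fun⟩
  obtain ⟨f, hf, hs⟩ := Nat.sInf_mem hne2
  obtain ⟨J, hJ, hJT, hJn⟩ := (pairCost_of_fun f _ T _ rfl hf hs).exists_edges hG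
  have hne1 : {n : ℕ | ∃ J : Set (Sym2 V),
        J ⊆ G.edgeSet ∧ oddVertexSet J = ↑T ∧ J.ncard = n}.Nonempty := ⟨_, J, hJ, hJT, rfl⟩
  apply le_antisymm
  · refine le_trans (Nat.sInf_le ?_) hJn
    exact ⟨J, hJ, hJT, rfl⟩
  · obtain ⟨K, hK, hKT, hKn⟩ := Nat.sInf_mem hne1
    obtain ⟨n, hn, hP⟩ := exists_pairCost hG _ K T hK hKT hKn
    refine le_trans (Nat.sInf_le ?_) hn
    exact hP.exists_fun
end
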